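/- arXiv:2112.05507 — 2 statements merged into one kernel-verified Lean document; each statement's English description precedes it below -/
import Mathlib

section
/- For b ≥ 2 and every positive integer n, ‖L_b^n‖ = ‖L_{b-1}^{n-1}‖ + ‖L_{b-1}^n‖, where L_k is the strictly lower triangular all-ones k×k matrix and ‖·‖ is the entrywise sum norm. -/
/-! The `i`-th row sum of `L_k ^ n` is the binomial coefficient `i.choose n` (rows numbered from `0`):
multiplying by `L_k` on the left replaces row sums by their partial sums, and the hockey-stick
identity `∑_{j < i} j.choose n = i.choose (n + 1)` gives the induction step. One more application of
that identity yields `‖L_k ^ n‖ = k.choose (n + 1)`, so the recursion is Pascal's rule. -/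

/-- The k×k strictly lower triangular all-ones matrix. -/
def L (k : ℕ) : Matrix (Fin k) (Fin k) ℕ :=
  Matrix.of fun i j => if (j : ℕ) < (i : ℕ) then 1 else 0

/-- The entrywise sum norm of a matrix (entries are nonnegative). -/
def nsum {k m : ℕ} (M : Matrix (Fin k) (Fin m) ℕ) : ℕ := ∑ i, ∑ j, M i j

/-- Hockey-stick identity. -/
lemma sum_range_choose_col (m n : ℕ) :
    ∑ j ∈ Finset.range m, j.choose n = m.choose (n + 1) := by
  induction m with
  | zero => simp
  | succ m ih => rw [Finset.sum_range_succ, ih, Nat.choose_succ_succ, add_comm]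

lemma row_sum_L_pow (k n : ℕ) (i : Fin k) :
    ∑ j, ((L k) ^ n) i j = (i : ℕ).choose n := by
  induction n generalizing i with
  | zero => simp [Matrix.one_apply]
  | succ n ih =>
    simp only [pow_succ', Matrix.mul_apply]
    rw [Finset.sum_comm]
    simp only [← Finset.mul_sum, ih]
    simp only [L, Matrix.of_apply, ite_mul, one_mul, zero_mul]
    rw [Fin.sum_univ_eq_sum_range (fun j => if j < (i : ℕ) then j.choose n else 0) k,
      ← Finset.sum_filter, ← sum_range_choose_col]
    congr 1
    ext j
    simp only [Finset.mem_filter, Finset.mem_range]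
    have := i.isLt
    omega

lemma nsum_L_pow (k n : ℕ) : nsum ((L k) ^ n) = k.choose (n + 1) := by
  simp only [nsum, row_sum_L_pow]
  rw [Fin.sum_univ_eq_sum_range (fun i => i.choose n) k, sum_range_choose_col]

/-- ‖L_b^n‖ = ‖L_{b-1}^{n-1}‖ + ‖L_{b-1}^n‖ for b ≥ 2 and n ≥ 1. -/
theorem norm_L_pow_rec (b n : ℕ) (hb : 2 ≤ b) (hn : 0 < n) :
    nsum ((L b) ^ n) = nsum ((L (b - 1)) ^ (n - 1)) + nsum ((L (b - 1)) ^ n) := by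
  obtain ⟨c, rfl⟩ : ∃ c, b = c + 1 := ⟨b - 1, by omega⟩
  obtain ⟨m, rfl⟩ : ∃ m, n = m + 1 := ⟨n - 1, by omega⟩
  simp only [nsum_L_pow, Nat.add_sub_cancel]
  exact Nat.choose_succ_succ c (m + 1)
end

section
/- Let M be a b×b {0,1}-matrix satisfying P1 and P2 (P2: (M^k)_{ii} ≤ 1 for all i and all k ≥ 1). Then for every i ∈ D_M the shift space A_M^ℕ = {infinite words w over {1,...,b} with M_{w_k w_{k+1}} = 1 for all k} contains exactly one periodic word starting with i, and for i ∉ D_M it contains no periodic word starting with i. -/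
/-!
A positive entry `(M ^ k) i j` is the same thing as an admissible path of length `k` from `i` to `j`
(`one_le_pow_of_path`, `exists_path_of_one_le_pow`), so a periodic word with head `i` yields a
positive diagonal entry, and a positive diagonal entry gives a closed path at `i` that can be
repeated forever.

For uniqueness, take two periodic words with the same head and a common period `P`. If they agree
at position `n` but not at `n + 1`, then the letter `a` at position `n` starts two closed paths of
length `P` with different second letters, so `(M ^ P) a a ≥ 2`, against the bound on diagonal
entries.
-/

theorem one_le_pow_of_path {b : ℕ} {M : Matrix (Fin b) (Fin b) ℕ} {w : ℕ → Fin b}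
    (hw : ∀ k, M (w k) (w (k + 1)) = 1) (n m : ℕ) : 1 ≤ (M ^ m) (w n) (w (n + m)) := by
  induction m with
  | zero => simp
  | succ m ih =>
    rw [pow_succ, Matrix.mul_apply]
    refine le_trans ?_ (Finset.single_le_sum
      (f := fun j => (M ^ m) (w n) j * M j (w (n + (m + 1))))
      (fun _ _ => Nat.zero_le _) (Finset.mem_univ (w (n + m))))
    have h := hw (n + m)
    rw [add_assoc] at h
    simpa [h] using ih

theorem exists_path_of_one_le_pow {b : ℕ} {M : Matrix (Fin b) (Fin b) ℕ}
    (h01 : ∀ i j, M i j = 0 ∨ M i j = 1) (k : ℕ) (i j : Fin b) (h : 1 ≤ (M ^ k) i j) :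
    ∃ w : ℕ → Fin b, w 0 = i ∧ w k = j ∧ ∀ n < k, M (w n) (w (n + 1)) = 1 := by
  induction k generalizing i with
  | zero =>
    have hij : i = j := by
      by_contra hne
      simp [Matrix.one_apply_ne hne] at h
    exact ⟨fun _ => i, rfl, hij, by simp⟩
  | succ k ih =>
    rw [pow_succ', Matrix.mul_apply] at h
    obtain ⟨l, -, hl⟩ := Finset.exists_ne_zero_of_sum_ne_zero (Nat.one_le_iff_ne_zero.mp h)
    obtain ⟨h1, h2⟩ := mul_ne_zero_iff.mp hl
    obtain ⟨w, hw0, hwk, hw⟩ := ih l (Nat.one_le_iff_ne_zero.mpr h2)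
    refine ⟨fun n => Nat.casesOn n i w, rfl, hwk, ?_⟩
    rintro (_ | n) hn
    · simpa [hw0] using (h01 i l).resolve_left h1
    · exact hw n (by omega)

/-- Two admissible words with a common period that agree at one position agree at the next:
otherwise the common letter would start two distinct closed paths of the same length, contradicting
the bound on diagonal entries. The period is written `q + 1` so that the first step of a closed
path can be split off. -/
theorem next_letter_eq {b : ℕ} {M : Matrix (Fin b) (Fin b) ℕ}
    (hP2 : ∀ (i : Fin b) (k : ℕ), 0 < k → (M ^ k) i i ≤ 1) {w v : ℕ → Fin b}
    (hw : ∀ k, M (w k) (w (k + 1)) = 1) (hv : ∀ k, M (v k) (v (k + 1)) = 1)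
    {q : ℕ} (hwq : ∀ k, w (k + (q + 1)) = w k) (hvq : ∀ k, v (k + (q + 1)) = v k)
    {n : ℕ} (h : w n = v n) : w (n + 1) = v (n + 1) := by
  by_contra hne
  have key := hP2 (w n) (q + 1) q.succ_pos
  rw [pow_succ', Matrix.mul_apply] at key
  have h2 := Finset.add_le_sum (f := fun j => M (w n) j * (M ^ q) j (w n))
    (fun _ _ => Nat.zero_le _) (Finset.mem_univ (w (n + 1))) (Finset.mem_univ (v (n + 1))) hne
  have hw1 := one_le_pow_of_path hw (n + 1) q
  have hv1 := one_le_pow_of_path hv (n + 1) q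
  rw [add_assoc, add_comm 1 q, hwq] at hw1
  rw [add_assoc, add_comm 1 q, hvq] at hv1
  have hvn := hv n
  rw [← h] at hv1 hvn
  simp only [hw n, hvn, one_mul] at h2
  omega


/-- For M satisfying P1 and P2: for each i ∈ D_M the shift space A_M^ℕ contains a
    unique periodic word of head i, and for i ∉ D_M it contains none. -/
theorem periodic_words (b : ℕ) (M : Matrix (Fin b) (Fin b) ℕ)
    (h01 : ∀ i j, M i j = 0 ∨ M i j = 1)
    (hP1 : ∀ i : Fin b, (∃ j, M j i ≠ 0) → ∃ j, M i j ≠ 0)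
    (hP2 : ∀ (i : Fin b) (k : ℕ), 0 < k → (M ^ k) i i ≤ 1) (i : Fin b) :
    ((∃ k : ℕ, 0 < k ∧ 1 ≤ (M ^ k) i i) →
      ∃! w : ℕ → Fin b, (∀ k, M (w k) (w (k + 1)) = 1) ∧ w 0 = i ∧
        ∃ p : ℕ, 0 < p ∧ ∀ k, w (k + p) = w k) ∧
    ((¬ ∃ k : ℕ, 0 < k ∧ 1 ≤ (M ^ k) i i) →
      ¬ ∃ w : ℕ → Fin b, (∀ k, M (w k) (w (k + 1)) = 1) ∧ w 0 = i ∧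
        ∃ p : ℕ, 0 < p ∧ ∀ k, w (k + p) = w k) := by
  refine ⟨?_, ?_⟩
  · rintro ⟨k, hk, h⟩
    obtain ⟨w, hw0, hwk, hw⟩ := exists_path_of_one_le_pow h01 k i i h
    -- The closed path of length `k` at `i`, repeated forever, is admissible.
    have hu : ∀ n, M (w (n % k)) (w ((n + 1) % k)) = 1 := by
      intro n
      have hlt := Nat.mod_lt n hk
      have hstep : w ((n + 1) % k) = w (n % k + 1) := by
        rcases Nat.lt_or_ge (n % k + 1) k with hc | hc
        · rw [← Nat.mod_add_mod, Nat.mod_eq_of_lt hc]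
        · have he : n % k + 1 = k := by omega
          rw [← Nat.mod_add_mod, he, Nat.mod_self, hw0, hwk]
      rw [hstep]
      exact hw _ hlt
    refine ⟨fun n => w (n % k), ⟨hu, by simpa using hw0, k, hk, by simp⟩, ?_⟩
    rintro v ⟨hv, hv0, p, hp, hvp⟩
    -- The product `k * p` is a period of both words.
    obtain ⟨q, hq⟩ := Nat.exists_eq_succ_of_ne_zero (Nat.mul_pos hk hp).ne'
    rw [Nat.succ_eq_add_one] at hq
    have hvq : ∀ n, v (n + (q + 1)) = v n := by
      rw [← hq]
      exact Function.Periodic.nat_mul (f := v) hvp k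
    have huq : ∀ n, w ((n + (q + 1)) % k) = w (n % k) := by
      intro n
      rw [← hq, Nat.add_mul_mod_self_left]
    funext n
    induction n with
    | zero => simpa [hw0] using hv0
    | succ n ih => exact next_letter_eq (w := v) (v := fun n => w (n % k)) hP2 hv hu hvq huq ih
  · rintro hD ⟨w, hw, hw0, p, hp, hper⟩
    refine hD ⟨p, hp, ?_⟩
    have h := one_le_pow_of_path hw 0 p
    rwa [hper 0, hw0] at h
end
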